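/- arXiv:1503.02624 — 9 statements merged into one kernel-verified Lean document; each statement's English description precedes it below -/
import Mathlib

section
/- Let N, k be natural numbers, let I, J ⊆ ℝ be open intervals, and let α₁ : I → ℝ^N, α₂ : J → ℝ^N be smooth curves. Suppose there exist pairwise orthogonal linear subspaces V₁, V, V₂ of ℝ^N whose sum is all of ℝ^N, with dim V = k, and points u₀ ∈ I, v₀ ∈ J such that α₁(u) − α₁(u₀) ∈ V₁ + V for all u ∈ I and α₂(v) − α₂(v₀) ∈ V + V₂ for all v ∈ J. Then there exist smooth functions a₁,…,a_k : I → ℝ and b₁,…,b_k : J → ℝ such that ⟨α₁'(u), α₂'(v)⟩ = Σ_{i=1}^{k} aᵢ(u)·bᵢ(v) for all u ∈ I and v ∈ J. -/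
/-!
The velocity of a curve staying in a translate of a linear subspace `W` lies in `W`, because `W` is
closed and contains all difference quotients (`deriv_mem_of_sub_mem`). So `α₁' ∈ V₁ + V` and
`α₂' ∈ V + V₂`, and by orthogonality only the `V`-components contribute to `⟪α₁', α₂'⟫`. Expanding
in an orthonormal basis `e` of `V` (`inner_eq_sum_of_mem_sup`), one takes `aᵢ = ⟪eᵢ, α₁'⟫` and
`bᵢ = ⟪eᵢ, α₂'⟫`.
-/

open Real Set
open scoped ContDiff RealInnerProductSpace

theorem deriv_mem_of_sub_mem {E : Type*} [NormedAddCommGroup E] [NormedSpace ℝ E]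
    [FiniteDimensional ℝ E] (W : Submodule ℝ E) {s : Set ℝ} (hs : IsOpen s) {f : ℝ → E} {c : E}
    (hf : ContDiffOn ℝ ∞ f s) (hW : ∀ t ∈ s, f t - c ∈ W) {t : ℝ} (ht : t ∈ s) :
    deriv f t ∈ W := by
  have hd : HasDerivAt f (deriv f t) t :=
    ((hf.differentiableOn (by simp)).differentiableAt (hs.mem_nhds ht)).hasDerivAt
  refine W.closed_of_finiteDimensional.mem_of_tendsto hd.tendsto_slope ?_
  filter_upwards [mem_nhdsWithin_of_mem_nhds (hs.mem_nhds ht)] with r hr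
  rw [slope_def_module]
  refine W.smul_mem _ ?_
  simpa using W.sub_mem (hW r hr) (hW t ht)

theorem inner_eq_sum_of_mem_sup {E : Type*} [NormedAddCommGroup E] [InnerProductSpace ℝ E]
    {V₁ V V₂ : Submodule ℝ E} {ι : Type*} [Fintype ι] (e : OrthonormalBasis ι ℝ V)
    (h12 : ∀ x ∈ V₁, ∀ y ∈ V, ⟪x, y⟫ = 0)
    (h13 : ∀ x ∈ V₁, ∀ y ∈ V₂, ⟪x, y⟫ = 0)
    (h23 : ∀ x ∈ V, ∀ y ∈ V₂, ⟪x, y⟫ = 0)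
    {x y : E} (hx : x ∈ V₁ ⊔ V) (hy : y ∈ V ⊔ V₂) :
    ⟪x, y⟫ = ∑ i, ⟪(e i : E), x⟫ * ⟪(e i : E), y⟫ := by
  obtain ⟨x₁, hx₁, p, hp, rfl⟩ := Submodule.mem_sup.1 hx
  obtain ⟨q, hq, y₂, hy₂, rfl⟩ := Submodule.mem_sup.1 hy
  have hpq : ⟪p, q⟫ = ∑ i, ⟪(e i : E), p⟫ * ⟪(e i : E), q⟫ := by
    have h := e.sum_inner_mul_inner ⟨p, hp⟩ ⟨q, hq⟩
    simp only [Submodule.coe_inner] at h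
    rw [← h]
    exact Finset.sum_congr rfl fun i _ => by rw [real_inner_comm p]
  have h1 : ∀ i, ⟪(e i : E), x₁⟫ = 0 := fun i => by
    rw [real_inner_comm]; exact h12 _ hx₁ _ (e i).2
  have h2 : ∀ i, ⟪(e i : E), y₂⟫ = 0 := fun i => h23 _ (e i).2 _ hy₂
  simp [inner_add_left, inner_add_right, h1, h2, h12 _ hx₁ _ hq, h13 _ hx₁ _ hy₂,
    h23 _ hp _ hy₂, hpq]

/-- Lemma on shared dimension, easy direction.
If there is an orthogonal decomposition `ℝ^N = V₁ ⊕ V ⊕ V₂` with `dim V = k` such that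
`α₁` lies in a translate of `V₁ + V` and `α₂` lies in a translate of `V + V₂`, then
`⟨α₁'(u), α₂'(v)⟩` can be written as `∑_{i=1}^k aᵢ(u) bᵢ(v)` with smooth one-variable
functions `aᵢ`, `bᵢ`. -/
theorem shared_subspace_implies_separated_expansion
    (N k : ℕ) (I J : Set ℝ)
    (hIopen : IsOpen I) (hIconn : I.OrdConnected)
    (hJopen : IsOpen J) (hJconn : J.OrdConnected)
    (α₁ α₂ : ℝ → EuclideanSpace ℝ (Fin N))
    (hα₁ : ContDiffOn ℝ ∞ α₁ I) (hα₂ : ContDiffOn ℝ ∞ α₂ J)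
    (V₁ V V₂ : Submodule ℝ (EuclideanSpace ℝ (Fin N)))
    (h12 : ∀ x ∈ V₁, ∀ y ∈ V, ⟪x, y⟫ = 0)
    (h13 : ∀ x ∈ V₁, ∀ y ∈ V₂, ⟪x, y⟫ = 0)
    (h23 : ∀ x ∈ V, ∀ y ∈ V₂, ⟪x, y⟫ = 0)
    (hsum : V₁ ⊔ V ⊔ V₂ = ⊤)
    (hdim : Module.finrank ℝ V = k)
    (u₀ : ℝ) (hu₀ : u₀ ∈ I) (v₀ : ℝ) (hv₀ : v₀ ∈ J)
    (hα₁V : ∀ u ∈ I, α₁ u - α₁ u₀ ∈ V₁ ⊔ V)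
    (hα₂V : ∀ v ∈ J, α₂ v - α₂ v₀ ∈ V ⊔ V₂) :
    ∃ a b : Fin k → ℝ → ℝ,
      (∀ i, ContDiffOn ℝ ∞ (a i) I) ∧ (∀ i, ContDiffOn ℝ ∞ (b i) J) ∧
      ∀ u ∈ I, ∀ v ∈ J,
        ⟪deriv α₁ u, deriv α₂ v⟫ = ∑ i, a i u * b i v := by
  let e : OrthonormalBasis (Fin k) ℝ V := (stdOrthonormalBasis ℝ V).reindex (finCongr hdim)
  have hd₁ : ContDiffOn ℝ ∞ (deriv α₁) I := hα₁.deriv_of_isOpen hIopen (by simp)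
  have hd₂ : ContDiffOn ℝ ∞ (deriv α₂) J := hα₂.deriv_of_isOpen hJopen (by simp)
  refine ⟨fun i u => ⟪(e i : EuclideanSpace ℝ (Fin N)), deriv α₁ u⟫,
    fun i v => ⟪(e i : EuclideanSpace ℝ (Fin N)), deriv α₂ v⟫,
    fun i => contDiffOn_const.inner ℝ hd₁, fun i => contDiffOn_const.inner ℝ hd₂, ?_⟩
  intro u hu v hv
  exact inner_eq_sum_of_mem_sup e h12 h13 h23
    (deriv_mem_of_sub_mem _ hIopen hα₁ hα₁V hu) (deriv_mem_of_sub_mem _ hJopen hα₂ hα₂V hv)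
end

section
/- Let N, k be natural numbers, let I, J ⊆ ℝ be open intervals, and let α₁ : I → ℝ^N, α₂ : J → ℝ^N be smooth curves. Suppose there exist smooth functions a₁,…,a_k : I → ℝ and b₁,…,b_k : J → ℝ such that ⟨α₁'(u), α₂'(v)⟩ = Σ_{i=1}^{k} aᵢ(u)·bᵢ(v) for all u ∈ I and v ∈ J. Then there exist pairwise orthogonal linear subspaces V₁, V, V₂ of ℝ^N whose sum is all of ℝ^N, with dim V ≤ k, and points u₀ ∈ I, v₀ ∈ J, such that α₁(u) − α₁(u₀) ∈ V₁ + V for all u ∈ I and α₂(v) − α₂(v₀) ∈ V + V₂ for all v ∈ J. -/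
/-!
Let `A` and `B` be the spans of the velocities of `α₁` and `α₂`, let `V` be the orthogonal
projection of `B` to `A`, and take `V₁ = A ⊓ Vᗮ`, `V₂ = Aᗮ`. Then `V₁ ⊔ V = A`, and `B ≤ V ⊔ V₂`
since `x = P x + (x - P x)` for the projection `P` to `A`; a curve stays in a translate of any
subspace containing its velocities (`sub_mem_of_deriv_mem`).

For the dimension bound, consider the linear map sending `x` to the function
`u ↦ ⟪α₁' u, x⟫` on `I`. It is injective on `A`, hence on `V`, and it does not distinguish `x` from
its projection to `A`. So it embeds `V` into the image of `B`, which by the separated expansion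
lies in the span of the `k` functions `aᵢ` (`finrank_map_starProjection_le`).
-/

open Real Set
open scoped ContDiff RealInnerProductSpace

/-- Pairing with a vector of `Wᗮ` gives a function with zero derivative on the interval, hence a
constant; so increments of the curve lie in `Wᗮᗮ = W`. -/
lemma sub_mem_of_deriv_mem {N : ℕ} {I : Set ℝ} (hIopen : IsOpen I) (hIconn : I.OrdConnected)
    {α : ℝ → EuclideanSpace ℝ (Fin N)} (hα : ContDiffOn ℝ ∞ α I)
    (W : Submodule ℝ (EuclideanSpace ℝ (Fin N))) (hW : ∀ u ∈ I, deriv α u ∈ W)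
    {u₀ u : ℝ} (hu₀ : u₀ ∈ I) (hu : u ∈ I) : α u - α u₀ ∈ W := by
  have hd : ∀ x ∈ I, HasDerivAt α (deriv α x) x := fun x hx =>
    ((hα.differentiableOn (by simp)).differentiableAt (hIopen.mem_nhds hx)).hasDerivAt
  rw [← W.orthogonal_orthogonal, Submodule.mem_orthogonal]
  intro w hw
  have hder : ∀ x ∈ I, HasDerivAt (fun t => ⟪w, α t⟫) 0 x := by
    intro x hx
    have h := (hasDerivAt_const x w).inner ℝ (hd x hx)
    simpa [Submodule.inner_left_of_mem_orthogonal (hW x hx) hw] using h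
  have hconst := hIopen.is_const_of_deriv_eq_zero hIconn.isPreconnected
    (fun x hx => (hder x hx).differentiableAt.differentiableWithinAt)
    (fun x hx => (hder x hx).deriv) hu hu₀
  rw [inner_sub_right, sub_eq_zero]
  exact hconst

/-- If the pairing of two families of vectors is a sum of `k` products of one-variable functions,
then the span of the second family projects to a subspace of dimension at most `k` of the span of
the first. -/
lemma finrank_map_starProjection_le {N k : ℕ} {ι κ : Type*}
    (f : ι → EuclideanSpace ℝ (Fin N)) (g : κ → EuclideanSpace ℝ (Fin N))
    (a : Fin k → ι → ℝ) (b : Fin k → κ → ℝ)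
    (h : ∀ u v, ⟪f u, g v⟫ = ∑ i, a i u * b i v) :
    Module.finrank ℝ ((Submodule.span ℝ (range g)).map
      (Submodule.span ℝ (range f)).starProjection.toLinearMap) ≤ k := by
  set A := Submodule.span ℝ (range f)
  set B := Submodule.span ℝ (range g)
  let T : EuclideanSpace ℝ (Fin N) →ₗ[ℝ] (ι → ℝ) := LinearMap.pi fun u => innerₛₗ ℝ (f u)
  have hT : ∀ x u, T x u = ⟪f u, x⟫ := fun _ _ => rfl
  have hTker : ∀ x, T x = 0 → x ∈ Aᗮ := by
    intro x hx
    rw [Submodule.mem_orthogonal]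
    intro y hy
    induction hy using Submodule.span_induction with
    | mem y hy =>
      obtain ⟨u, rfl⟩ := hy
      rw [← hT, hx, Pi.zero_apply]
    | zero => simp
    | add y z _ _ hy hz => rw [inner_add_left, hy, hz, add_zero]
    | smul c y _ hy => rw [inner_smul_left, hy, mul_zero]
  have hTproj : ∀ x, T (A.starProjection x) = T x := by
    intro x
    funext u
    have hfu : f u ∈ A := Submodule.subset_span (mem_range_self u)
    have h0 := Submodule.inner_right_of_mem_orthogonal hfu (A.sub_starProjection_mem_orthogonal x)
    rw [inner_sub_right, sub_eq_zero] at h0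
    rw [hT, hT, h0]
  have hTB : ∀ x ∈ B, T x ∈ Submodule.span ℝ (range a) := by
    intro x hx
    have hle : B ≤ (Submodule.span ℝ (range a)).comap T := by
      refine Submodule.span_le.mpr ?_
      rintro _ ⟨v, rfl⟩
      have hv : T (g v) = ∑ i, b i v • a i := by
        funext u
        rw [hT, h]
        simp [mul_comm]
      change T (g v) ∈ Submodule.span ℝ (range a)
      rw [hv]
      exact Submodule.sum_mem _ fun i _ =>
        Submodule.smul_mem _ _ (Submodule.subset_span (mem_range_self i))
    exact hle hx
  set V := B.map A.starProjection.toLinearMap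
  have hVmem : ∀ x : V, T.domRestrict V x ∈ Submodule.span ℝ (range a) := by
    rintro ⟨_, x, hx, rfl⟩
    change T (A.starProjection x) ∈ Submodule.span ℝ (range a)
    rw [hTproj]
    exact hTB x hx
  have hinj : Function.Injective ((T.domRestrict V).codRestrict _ hVmem) := by
    rw [injective_iff_map_eq_zero]
    rintro ⟨y, hy⟩ h0
    have hy0 : T y = 0 := congrArg Subtype.val h0
    have hyA : y ∈ A := by
      obtain ⟨x, -, rfl⟩ := hy
      exact A.starProjection_apply_mem x
    exact Subtype.ext (inner_self_eq_zero.mp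
      (Submodule.inner_right_of_mem_orthogonal hyA (hTker y hy0)))
  calc Module.finrank ℝ V ≤ Module.finrank ℝ (Submodule.span ℝ (range a)) :=
        have : Module.Finite ℝ (Submodule.span ℝ (range a)) := .span_of_finite ℝ (finite_range a)
        LinearMap.finrank_le_finrank_of_injective hinj
    _ ≤ k := (finrank_range_le_card (R := ℝ) a).trans_eq (Fintype.card_fin k)

/-- Lemma 1 of the paper, nontrivial direction.
If `⟨α₁'(u), α₂'(v)⟩ = ∑_{i=1}^k aᵢ(u) bᵢ(v)` for smooth one-variable functions `aᵢ`, `bᵢ`,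
then there is an orthogonal decomposition `ℝ^N = V₁ ⊕ V ⊕ V₂` with `dim V ≤ k` such that
`α₁` lies in a translate of `V₁ + V` and `α₂` lies in a translate of `V + V₂`. -/
theorem separated_expansion_implies_shared_subspace
    (N k : ℕ) (I J : Set ℝ)
    (hIopen : IsOpen I) (hIconn : I.OrdConnected)
    (hJopen : IsOpen J) (hJconn : J.OrdConnected)
    (hIne : I.Nonempty) (hJne : J.Nonempty)
    (α₁ α₂ : ℝ → EuclideanSpace ℝ (Fin N))
    (hα₁ : ContDiffOn ℝ ∞ α₁ I) (hα₂ : ContDiffOn ℝ ∞ α₂ J)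
    (a b : Fin k → ℝ → ℝ)
    (ha : ∀ i, ContDiffOn ℝ ∞ (a i) I) (hb : ∀ i, ContDiffOn ℝ ∞ (b i) J)
    (hexp : ∀ u ∈ I, ∀ v ∈ J,
      ⟪deriv α₁ u, deriv α₂ v⟫ = ∑ i, a i u * b i v) :
    ∃ (V₁ V V₂ : Submodule ℝ (EuclideanSpace ℝ (Fin N))),
      (∀ x ∈ V₁, ∀ y ∈ V, ⟪x, y⟫ = 0) ∧
      (∀ x ∈ V₁, ∀ y ∈ V₂, ⟪x, y⟫ = 0) ∧
      (∀ x ∈ V, ∀ y ∈ V₂, ⟪x, y⟫ = 0) ∧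
      V₁ ⊔ V ⊔ V₂ = ⊤ ∧
      Module.finrank ℝ V ≤ k ∧
      ∃ u₀ ∈ I, ∃ v₀ ∈ J,
        (∀ u ∈ I, α₁ u - α₁ u₀ ∈ V₁ ⊔ V) ∧
        (∀ v ∈ J, α₂ v - α₂ v₀ ∈ V ⊔ V₂) := by
  let f : I → EuclideanSpace ℝ (Fin N) := fun u => deriv α₁ u
  let g : J → EuclideanSpace ℝ (Fin N) := fun v => deriv α₂ v
  set A := Submodule.span ℝ (range f)
  set B := Submodule.span ℝ (range g)
  set V := B.map A.starProjection.toLinearMap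
  have hVA : V ≤ A := by
    rintro _ ⟨x, -, rfl⟩
    exact A.starProjection_apply_mem x
  have hsup : (Vᗮ ⊓ A) ⊔ V = A := by
    rw [sup_comm]
    exact Submodule.sup_orthogonal_inf_of_hasOrthogonalProjection hVA
  have hBV : B ≤ V ⊔ Aᗮ := by
    intro x hx
    rw [← add_sub_cancel (A.starProjection x) x]
    exact Submodule.add_mem_sup ⟨x, hx, rfl⟩ (A.sub_starProjection_mem_orthogonal x)
  obtain ⟨u₀, hu₀⟩ := hIne
  obtain ⟨v₀, hv₀⟩ := hJne
  refine ⟨Vᗮ ⊓ A, V, Aᗮ, ?_, ?_, ?_, ?_, ?_, u₀, hu₀, v₀, hv₀, ?_, ?_⟩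
  · exact fun x hx y hy => Submodule.inner_left_of_mem_orthogonal hy hx.1
  · exact fun x hx y hy => Submodule.inner_right_of_mem_orthogonal hx.2 hy
  · exact fun x hx y hy => Submodule.inner_right_of_mem_orthogonal (hVA hx) hy
  · rw [hsup]
    exact Submodule.sup_orthogonal_of_hasOrthogonalProjection
  · exact finrank_map_starProjection_le f g (fun i u => a i u) (fun i v => b i v)
      fun u v => hexp u u.2 v v.2
  · intro u hu
    rw [hsup]
    exact sub_mem_of_deriv_mem hIopen hIconn hα₁ A
      (fun x hx => Submodule.subset_span ⟨⟨x, hx⟩, rfl⟩) hu₀ hu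
  · intro v hv
    exact sub_mem_of_deriv_mem hJopen hJconn hα₂ _
      (fun x hx => hBV (Submodule.subset_span ⟨⟨x, hx⟩, rfl⟩)) hv₀ hv
end

section
/- Let Ω ⊆ ℝ² be an open set, let κ, κ̂ : Ω → (0,∞) and Λ, Λ̂ : Ω → ℝ be smooth functions satisfying κ·Λ = κ̂·Λ̂ and (∂_u κ)/κ + 2Λ = (∂_u κ̂)/κ̂ + 2Λ̂ on Ω. Then the ratio τ := κ̂/κ satisfies ∂_u τ = 2·Λ·(τ − 1) on Ω, and at every point where τ ≠ 0 one has Λ̂ = Λ/τ. -/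
/-!
Logarithmic differentiation of `τ = κ'/κ` gives `τ_u = τ (κ'_u/κ' - κ_u/κ)`. The second invariant
turns the bracket into `2 (Λ - Λ')`, and the first one says `τ Λ' = Λ`, so `τ_u = 2 Λ (τ - 1)`.
-/

open Real Set
open scoped ContDiff

/-- Partial derivative in the first variable of `ℝ²`. -/
noncomputable def pdu (f : ℝ × ℝ → ℝ) (p : ℝ × ℝ) : ℝ := deriv (fun t => f (t, p.2)) p.1

/-- On an open set, smoothness gives differentiability of the restriction to horizontal lines,
so that the derivative in `pdu` is a genuine one. -/
lemma differentiableAt_slice {Ω : Set (ℝ × ℝ)} (hΩ : IsOpen Ω) {f : ℝ × ℝ → ℝ}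
    (hf : ContDiffOn ℝ ∞ f Ω) {p : ℝ × ℝ} (hp : p ∈ Ω) :
    DifferentiableAt ℝ (fun t => f (t, p.2)) p.1 := by
  have h : DifferentiableAt ℝ f (p.1, p.2) :=
    (hf.contDiffAt (hΩ.mem_nhds hp)).differentiableAt (by simp)
  exact h.comp p.1 (f := fun t : ℝ => (t, p.2)) (by fun_prop)

/-- If `κ·Λ = κ̂·Λ̂` and `κ_u/κ + 2Λ = κ̂_u/κ̂ + 2Λ̂` for smooth positive
`κ, κ̂` and smooth `Λ, Λ̂`, then the ratio `τ = κ̂/κ` satisfies `τ_u = 2Λ(τ - 1)`, and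
wherever `τ ≠ 0` one has `Λ̂ = Λ/τ`. -/
theorem invariants_force_ratio_pde
    (Ω : Set (ℝ × ℝ)) (hΩ : IsOpen Ω)
    (κ κ' Λ Λ' : ℝ × ℝ → ℝ)
    (hκ : ContDiffOn ℝ ∞ κ Ω) (hκ' : ContDiffOn ℝ ∞ κ' Ω)
    (hΛ : ContDiffOn ℝ ∞ Λ Ω) (hΛ' : ContDiffOn ℝ ∞ Λ' Ω)
    (hκpos : ∀ p ∈ Ω, 0 < κ p) (hκ'pos : ∀ p ∈ Ω, 0 < κ' p)
    (hC1 : ∀ p ∈ Ω, κ p * Λ p = κ' p * Λ' p)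
    (hC2 : ∀ p ∈ Ω, pdu κ p / κ p + 2 * Λ p = pdu κ' p / κ' p + 2 * Λ' p) :
    ∀ p ∈ Ω,
      pdu (fun q => κ' q / κ q) p = 2 * Λ p * (κ' p / κ p - 1) ∧
      (κ' p / κ p ≠ 0 → Λ' p = Λ p / (κ' p / κ p)) := by
  intro p hp
  have hk := (hκpos p hp).ne'
  have hk' := (hκ'pos p hp).ne'
  have hΛ'eq : Λ' p = κ p * Λ p / κ' p := by
    rw [eq_div_iff hk', hC1 p hp, mul_comm]
  refine ⟨?_, fun _ => by rw [hΛ'eq]; field_simp⟩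
  have hlog : pdu κ' p = κ' p * (pdu κ p / κ p + 2 * Λ p - 2 * Λ' p) := by
    rw [hC2 p hp]; field_simp; ring
  have hquot : pdu (fun q => κ' q / κ q) p
      = (pdu κ' p * κ p - κ' p * pdu κ p) / κ p ^ 2 :=
    deriv_fun_div (differentiableAt_slice hΩ hκ' hp) (differentiableAt_slice hΩ hκ hp) hk
  rw [hquot, hlog, hΛ'eq]
  field_simp
  ring
end

section
/- Let Ω ⊆ ℝ² be an open set and let μ, a, b, c, d : Ω → ℝ be smooth functions satisfying the first-order system ∂_u μ = μ·a − b and ∂_v μ = μ·(μ·c − d) on Ω. Then μ satisfies the pointwise polynomial identity (a·c + ∂_u c)·μ² − (2·b·c + ∂_u d + ∂_v a)·μ + (b·d + ∂_v b) = 0 on Ω. -/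
/-!
The identity is the equality of mixed partials `∂_v ∂_u μ = ∂_u ∂_v μ`. Since `Ω` is open, both
equations of the system hold near each point of `Ω` and may be differentiated there. The first gives
`∂_v ∂_u μ = μ_v a + μ a_v - b_v`, the second `∂_u ∂_v μ = μ_u (μ c - d) + μ (μ_u c + μ c_u - d_u)`;
substituting the system for `μ_u` and `μ_v` and subtracting gives the polynomial.
-/

open Real Set
open scoped ContDiff

/-- Partial derivative in the second variable of `ℝ²`. -/
noncomputable def pdv (f : ℝ × ℝ → ℝ) (p : ℝ × ℝ) : ℝ := deriv (fun t => f (p.1, t)) p.2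

theorem pdu_eq_fderiv {f : ℝ × ℝ → ℝ} {p : ℝ × ℝ} (hf : DifferentiableAt ℝ f p) :
    pdu f p = fderiv ℝ f p (1, 0) := by
  have h : HasDerivAt (fun t : ℝ => (t, p.2)) ((1 : ℝ), (0 : ℝ)) p.1 :=
    (hasDerivAt_id p.1).prodMk (hasDerivAt_const p.1 p.2)
  exact (HasFDerivAt.comp_hasDerivAt p.1 (f := fun t : ℝ => (t, p.2)) hf.hasFDerivAt h).deriv

theorem pdv_eq_fderiv {f : ℝ × ℝ → ℝ} {p : ℝ × ℝ} (hf : DifferentiableAt ℝ f p) :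
    pdv f p = fderiv ℝ f p (0, 1) := by
  have h : HasDerivAt (fun t : ℝ => (p.1, t)) ((0 : ℝ), (1 : ℝ)) p.2 :=
    (hasDerivAt_const p.2 p.1).prodMk (hasDerivAt_id p.2)
  exact (HasFDerivAt.comp_hasDerivAt p.2 (f := fun t : ℝ => (p.1, t)) hf.hasFDerivAt h).deriv

/-- A second directional derivative of `f`, computed from a function `g` that agrees near `p` with
the first directional derivative. -/
theorem fderiv_fderiv_apply_of_eventuallyEq {f g : ℝ × ℝ → ℝ} {p : ℝ × ℝ} (v w : ℝ × ℝ)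
    (hf : DifferentiableAt ℝ (fderiv ℝ f) p)
    (h : (fun q => fderiv ℝ f q v) =ᶠ[nhds p] g) :
    fderiv ℝ (fderiv ℝ f) p w v = fderiv ℝ g p w := by
  rw [← h.fderiv_eq, fderiv_clm_apply hf (differentiableAt_const v)]
  simp

/-- the integrability condition (ic) of system (hh).
Any smooth solution `μ` of the first-order system `μ_u = μa - b`, `μ_v = μ(μc - d)` on an
open set `Ω ⊆ ℝ²` is a root of the quadratic polynomial
`P(μ) = (ac + c_u)μ² - (2bc + d_u + a_v)μ + (bd + b_v)`. -/
theorem integrability_condition_of_system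
    (Ω : Set (ℝ × ℝ)) (hΩ : IsOpen Ω)
    (μ a b c d : ℝ × ℝ → ℝ)
    (hμ : ContDiffOn ℝ ∞ μ Ω) (ha : ContDiffOn ℝ ∞ a Ω) (hb : ContDiffOn ℝ ∞ b Ω)
    (hc : ContDiffOn ℝ ∞ c Ω) (hd : ContDiffOn ℝ ∞ d Ω)
    (hsys_u : ∀ p ∈ Ω, pdu μ p = μ p * a p - b p)
    (hsys_v : ∀ p ∈ Ω, pdv μ p = μ p * (μ p * c p - d p)) :
    ∀ p ∈ Ω,
      (a p * c p + pdu c p) * μ p ^ 2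
        - (2 * b p * c p + pdu d p + pdv a p) * μ p
        + (b p * d p + pdv b p) = 0 := by
  intro p hp
  have hne : (∞ : WithTop ℕ∞) ≠ 0 := by simp
  have hΩp : Ω ∈ nhds p := hΩ.mem_nhds hp
  have hμ' : ∀ q ∈ Ω, DifferentiableAt ℝ μ q := fun q hq =>
    (hμ.contDiffAt (hΩ.mem_nhds hq)).differentiableAt hne
  have hap := (ha.contDiffAt hΩp).differentiableAt hne
  have hbp := (hb.contDiffAt hΩp).differentiableAt hne
  have hcp := (hc.contDiffAt hΩp).differentiableAt hne
  have hdp := (hd.contDiffAt hΩp).differentiableAt hne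
  have hμp := hμ' p hp
  have hμ2 : DifferentiableAt ℝ (fderiv ℝ μ) p :=
    ((hμ.contDiffAt hΩp).fderiv_right (m := 1) (by norm_cast)).differentiableAt (by simp)
  have hsymm : IsSymmSndFDerivAt ℝ μ p :=
    (hμ.contDiffAt hΩp).isSymmSndFDerivAt (by simp; norm_cast)
  have hu : (fun q => fderiv ℝ μ q (1, 0)) =ᶠ[nhds p] fun q => μ q * a q - b q := by
    filter_upwards [hΩp] with q hq
    rw [← pdu_eq_fderiv (hμ' q hq), hsys_u q hq]
  have hv : (fun q => fderiv ℝ μ q (0, 1)) =ᶠ[nhds p] fun q => μ q * (μ q * c q - d q) := by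
    filter_upwards [hΩp] with q hq
    rw [← pdv_eq_fderiv (hμ' q hq), hsys_v q hq]
  have key := hsymm (0, 1) (1, 0)
  rw [fderiv_fderiv_apply_of_eventuallyEq _ _ hμ2 hu,
    fderiv_fderiv_apply_of_eventuallyEq _ _ hμ2 hv,
    ((hμp.hasFDerivAt.fun_mul hap.hasFDerivAt).fun_sub hbp.hasFDerivAt).fderiv,
    (hμp.hasFDerivAt.fun_mul
      ((hμp.hasFDerivAt.fun_mul hcp.hasFDerivAt).fun_sub hdp.hasFDerivAt)).fderiv] at key
  simp only [add_apply, sub_apply, smul_apply, smul_eq_mul,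
    ← pdu_eq_fderiv hμp, ← pdv_eq_fderiv hμp, ← pdv_eq_fderiv hap, ← pdv_eq_fderiv hbp,
    ← pdu_eq_fderiv hcp, ← pdu_eq_fderiv hdp, hsys_u p hp, hsys_v p hp] at key
  linear_combination -key
end

section
/- Let Ω ⊆ ℝ² be an open set and s : Ω → (0,1) a smooth function. Set Λᵘ = (∂_u s)/(2s) and Λᵛ = (∂_v s)/(2s), and define a = 2Λᵘ − (∂_u s)/s, b = 2Λᵘ/s, c = 2sΛᵛ/(1−s), d = 2Λᵛ + (∂_v s)/(s(1−s)). Then for every real number μ and every point of Ω, (a·c + ∂_u c)·μ² − (2·b·c + ∂_u d + ∂_v a)·μ + (b·d + ∂_v b) = (1/(1−s))·(∂_u∂_v s + (∂_u s)(∂_v s)/(1−s))·(μ − 1/s)·(μ + 1 − 1/s). In particular, μ = 1/s and μ = 1/s − 1 are roots of this quadratic at every point. -/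
/-!
Here `a` vanishes identically, and on `Ω` one has `b = s_u / s²`, `c = s_v / (1 - s)` and
`d = s_v / s + s_v / (s (1 - s))`. Differentiating these once more, each coefficient of the
polynomial is an explicit rational expression in `s, s_u, s_v, s_uv, s_vu`. Since `s` is smooth,
`s_uv = s_vu` (`pdv_pdu_eq_pdu_pdv`), and the factorization becomes an identity of rational
functions with denominators `s` and `1 - s`, both nonzero on `Ω`. The two roots are read off from
the factors.

The analytic input is that `pdu s` and `pdv s` agree near each point of `Ω` with the Fréchet
derivative of `s` applied to `(1, 0)` and `(0, 1)`.
-/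

open Real Set
open scoped ContDiff

theorem hasDerivAt_fst_slice {f : ℝ × ℝ → ℝ} {p : ℝ × ℝ} (hf : DifferentiableAt ℝ f p) :
    HasDerivAt (fun t => f (t, p.2)) (fderiv ℝ f p (1, 0)) p.1 :=
  HasFDerivAt.comp_hasDerivAt (f := fun t : ℝ => (t, p.2)) p.1 hf.hasFDerivAt
    ((hasDerivAt_id p.1).prodMk (hasDerivAt_const p.1 p.2))

theorem hasDerivAt_snd_slice {f : ℝ × ℝ → ℝ} {p : ℝ × ℝ} (hf : DifferentiableAt ℝ f p) :
    HasDerivAt (fun t => f (p.1, t)) (fderiv ℝ f p (0, 1)) p.2 :=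
  HasFDerivAt.comp_hasDerivAt (f := fun t : ℝ => (p.1, t)) p.2 hf.hasFDerivAt
    ((hasDerivAt_const p.2 p.1).prodMk (hasDerivAt_id p.2))

theorem hasDerivAt_pdu {f : ℝ × ℝ → ℝ} {p : ℝ × ℝ} (hf : DifferentiableAt ℝ f p) :
    HasDerivAt (fun t => f (t, p.2)) (pdu f p) p.1 :=
  pdu_eq_fderiv hf ▸ hasDerivAt_fst_slice hf

theorem hasDerivAt_pdv {f : ℝ × ℝ → ℝ} {p : ℝ × ℝ} (hf : DifferentiableAt ℝ f p) :
    HasDerivAt (fun t => f (p.1, t)) (pdv f p) p.2 :=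
  pdv_eq_fderiv hf ▸ hasDerivAt_snd_slice hf

theorem eventually_differentiableAt {f : ℝ × ℝ → ℝ} {p : ℝ × ℝ} (hf : ContDiffAt ℝ 2 f p) :
    ∀ᶠ q in nhds p, DifferentiableAt ℝ f q :=
  (hf.eventually (by simp)).mono fun _ hq => hq.differentiableAt (by simp)

theorem pdu_eventuallyEq {f : ℝ × ℝ → ℝ} {p : ℝ × ℝ} (hf : ContDiffAt ℝ 2 f p) :
    pdu f =ᶠ[nhds p] fun q => fderiv ℝ f q (1, 0) :=
  (eventually_differentiableAt hf).mono fun _ hq => pdu_eq_fderiv hq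

theorem pdv_eventuallyEq {f : ℝ × ℝ → ℝ} {p : ℝ × ℝ} (hf : ContDiffAt ℝ 2 f p) :
    pdv f =ᶠ[nhds p] fun q => fderiv ℝ f q (0, 1) :=
  (eventually_differentiableAt hf).mono fun _ hq => pdv_eq_fderiv hq

theorem differentiableAt_fderiv {f : ℝ × ℝ → ℝ} {p : ℝ × ℝ} (hf : ContDiffAt ℝ 2 f p) :
    DifferentiableAt ℝ (fderiv ℝ f) p :=
  (hf.fderiv_right (m := 1) (by norm_num)).differentiableAt (by simp)

theorem differentiableAt_pdu {f : ℝ × ℝ → ℝ} {p : ℝ × ℝ} (hf : ContDiffAt ℝ 2 f p) :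
    DifferentiableAt ℝ (pdu f) p :=
  ((differentiableAt_fderiv hf).clm_apply
    (differentiableAt_const _)).congr_of_eventuallyEq (pdu_eventuallyEq hf)

theorem differentiableAt_pdv {f : ℝ × ℝ → ℝ} {p : ℝ × ℝ} (hf : ContDiffAt ℝ 2 f p) :
    DifferentiableAt ℝ (pdv f) p :=
  ((differentiableAt_fderiv hf).clm_apply
    (differentiableAt_const _)).congr_of_eventuallyEq (pdv_eventuallyEq hf)

/-- Schwarz's theorem, from the symmetry of the second Fréchet derivative. -/
theorem pdv_pdu_eq_pdu_pdv {f : ℝ × ℝ → ℝ} {p : ℝ × ℝ} (hf : ContDiffAt ℝ 2 f p) :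
    pdv (pdu f) p = pdu (pdv f) p := by
  rw [pdv_eq_fderiv (differentiableAt_pdu hf), pdu_eq_fderiv (differentiableAt_pdv hf),
    (pdu_eventuallyEq hf).fderiv_eq, (pdv_eventuallyEq hf).fderiv_eq,
    fderiv_clm_apply (differentiableAt_fderiv hf) (differentiableAt_const _),
    fderiv_clm_apply (differentiableAt_fderiv hf) (differentiableAt_const _)]
  simpa using (hf.isSymmSndFDerivAt (by simp)).eq (0, 1) (1, 0)

/-- factorization (sb1) of the integrability polynomial in the
separated-variables case `2Λᵘ = s_u/s`, `2Λᵛ = s_v/s` of Sbrana-Cartan hypersurfaces of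
intersection type. In particular `μ = 1/s` and `μ = 1/s - 1` are roots. -/
theorem factorization_of_integrability_polynomial_intersection_type
    (Ω : Set (ℝ × ℝ)) (hΩ : IsOpen Ω)
    (s : ℝ × ℝ → ℝ)
    (hs : ContDiffOn ℝ ∞ s Ω) (hs01 : ∀ p ∈ Ω, s p ∈ Set.Ioo (0:ℝ) 1)
    (Λu Λv a b c d : ℝ × ℝ → ℝ)
    (hΛu : Λu = fun p => pdu s p / (2 * s p))
    (hΛv : Λv = fun p => pdv s p / (2 * s p))
    (ha : a = fun p => 2 * Λu p - pdu s p / s p)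
    (hb : b = fun p => 2 * Λu p / s p)
    (hc : c = fun p => 2 * s p * Λv p / (1 - s p))
    (hd : d = fun p => 2 * Λv p + pdv s p / (s p * (1 - s p))) :
    ∀ μ : ℝ, ∀ p ∈ Ω,
      (a p * c p + pdu c p) * μ ^ 2
          - (2 * b p * c p + pdu d p + pdv a p) * μ
          + (b p * d p + pdv b p) =
        (1 / (1 - s p)) * (pdu (pdv s) p + pdu s p * pdv s p / (1 - s p)) *
          (μ - 1 / s p) * (μ + 1 - 1 / s p) ∧
      ((a p * c p + pdu c p) * (1 / s p) ^ 2
          - (2 * b p * c p + pdu d p + pdv a p) * (1 / s p)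
          + (b p * d p + pdv b p) = 0) ∧
      ((a p * c p + pdu c p) * (1 / s p - 1) ^ 2
          - (2 * b p * c p + pdu d p + pdv a p) * (1 / s p - 1)
          + (b p * d p + pdv b p) = 0) := by
  intro μ p hp
  -- The two root claims are the factorization at particular values of `μ`.
  suffices key : ∀ μ : ℝ,
      (a p * c p + pdu c p) * μ ^ 2
          - (2 * b p * c p + pdu d p + pdv a p) * μ
          + (b p * d p + pdv b p) =
        (1 / (1 - s p)) * (pdu (pdv s) p + pdu s p * pdv s p / (1 - s p)) *
          (μ - 1 / s p) * (μ + 1 - 1 / s p) by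
    refine ⟨key μ, ?_, ?_⟩
    · rw [key]; ring
    · rw [key]; ring
  intro μ
  have hsp : ContDiffAt ℝ 2 s p :=
    (hs.contDiffAt (hΩ.mem_nhds hp)).of_le (WithTop.coe_le_coe.2 le_top)
  have h0 : s p ≠ 0 := (hs01 p hp).1.ne'
  have h1 : 1 - s p ≠ 0 := (sub_pos.2 (hs01 p hp).2).ne'
  have hsd : DifferentiableAt ℝ s p := hsp.differentiableAt (by simp)
  have su := hasDerivAt_pdu hsd
  have sv := hasDerivAt_pdv hsd
  have svu := hasDerivAt_pdu (differentiableAt_pdv hsp)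
  have suv := hasDerivAt_pdv (differentiableAt_pdu hsp)
  rw [pdv_pdu_eq_pdu_pdv hsp] at suv
  -- The cancellation in `a` is valid even where `s` vanishes, both quotients then being `0`.
  have ha0 : a = fun _ => 0 := by
    rw [ha, hΛu]
    funext q
    ring
  have hav : pdv a p = 0 := by rw [ha0]; simp [pdv]
  have h20 : 2 * s p ≠ 0 := mul_ne_zero two_ne_zero h0
  have hcu : pdu c p =
      pdu (pdv s) p / (1 - s p) + pdu s p * pdv s p / (1 - s p) ^ 2 := by
    rw [hc, hΛv]
    refine (((su.const_mul 2).mul (svu.div (su.const_mul 2) h20)).div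
      (su.const_sub 1) h1).deriv.trans ?_
    simp only [Prod.mk.eta, Pi.mul_apply, Pi.div_apply]
    field_simp
    ring
  have hdu : pdu d p =
      pdu (pdv s) p / s p - pdu s p * pdv s p / s p ^ 2
        + pdu (pdv s) p / (s p * (1 - s p))
        - pdu s p * pdv s p * (1 - 2 * s p) / (s p * (1 - s p)) ^ 2 := by
    rw [hd, hΛv]
    refine (((svu.div (su.const_mul 2) h20).const_mul 2).add
      (svu.div (su.mul (su.const_sub 1)) (mul_ne_zero h0 h1))).deriv.trans ?_
    simp only [Prod.mk.eta, Pi.mul_apply]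
    field_simp
    ring
  have hbv : pdv b p =
      pdu (pdv s) p / s p ^ 2 - 2 * pdu s p * pdv s p / s p ^ 3 := by
    rw [hb, hΛu]
    refine (((suv.div (sv.const_mul 2) h20).const_mul 2).div sv h0).deriv.trans ?_
    simp only [Prod.mk.eta, Pi.div_apply]
    field_simp
    ring
  rw [hcu, hdu, hbv, hav, ha0, hb, hc, hd, hΛu, hΛv]
  field_simp
  ring
end

section
/- Let τᵘ, τᵛ > 0 and θ ∈ (0,π) be real numbers with τᵘ·τᵛ > cos²θ. Define cos θ̂ := cos θ/√(τᵘτᵛ) (with θ̂ ∈ (0,π)) and k := sin²θ̂ / sin²θ. Then the discriminant of the quadratic polynomial h(t) = t²·(k·τᵛ − 1) − 2t·cos θ̂·(k·τᵘτᵛ − 1) + (k·τᵘ − 1), namely 4·cos²θ̂·(k·τᵘτᵛ − 1)² − 4·(k·τᵛ − 1)·(k·τᵘ − 1), equals −4·k·(τᵘ − 1)·(τᵛ − 1). -/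
open Real Set

/-- The discriminant of the quadratic
`h(t) = t²(kτᵛ - 1) - 2t·cos θ̂·(kτᵘτᵛ - 1) + (kτᵘ - 1)`, where
`cos θ̂ = cos θ/√(τᵘτᵛ)` and `k = sin²θ̂/sin²θ`, equals `-4k(τᵘ - 1)(τᵛ - 1)`. -/
theorem discriminant_of_shape_operator_polynomial
    (τu τv θ θ' : ℝ) (hτu : 0 < τu) (hτv : 0 < τv)
    (hθ : θ ∈ Set.Ioo 0 π) (hθ' : θ' ∈ Set.Ioo 0 π)
    (hgt : Real.cos θ ^ 2 < τu * τv)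
    (hcos : Real.cos θ' = Real.cos θ / Real.sqrt (τu * τv))
    (k : ℝ) (hk : k = Real.sin θ' ^ 2 / Real.sin θ ^ 2) :
    4 * Real.cos θ' ^ 2 * (k * (τu * τv) - 1) ^ 2
        - 4 * (k * τv - 1) * (k * τu - 1)
      = -4 * k * (τu - 1) * (τv - 1) := by
  have hP : 0 < τu * τv := mul_pos hτu hτv
  have hsin : Real.sin θ ^ 2 ≠ 0 := pow_ne_zero 2 (Real.sin_pos_of_mem_Ioo hθ).ne'
  have hcos_sq : Real.cos θ' ^ 2 * (τu * τv) = Real.cos θ ^ 2 := by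
    rw [hcos, div_pow, Real.sq_sqrt hP.le, div_mul_cancel₀ _ hP.ne']
  have hk_mul : k * Real.sin θ ^ 2 = Real.sin θ' ^ 2 := by
    rw [hk, div_mul_cancel₀ _ hsin]
  -- The relation defining k, in cosines: it eliminates the main angle of the deformation
  -- from the discriminant.
  have key : Real.cos θ' ^ 2 * (k * (τu * τv) - 1) = k - 1 := by
    rw [Real.sin_sq, Real.sin_sq] at hk_mul
    linear_combination k * hcos_sq - hk_mul
  linear_combination 4 * (k * (τu * τv) - 1) * key
end

section
/- Let τᵘ, τᵛ > 0 and θ ∈ (0,π) be real numbers with cos θ ≠ 0 and τᵘ·τᵛ > cos²θ. Define cos θ̂ := cos θ/√(τᵘτᵛ) (with θ̂ ∈ (0,π)), k := sin²θ̂ / sin²θ, and h(t) = t²·(k·τᵛ − 1) − 2t·cos θ̂·(k·τᵘτᵛ − 1) + (k·τᵘ − 1). Then h(1/cos θ̂) = (k·τᵘ·(τᵛ − 1)/cos²θ)·(τᵛ − cos²θ) and h(cos θ̂) = (k·(τᵘ − 1)/τᵘ)·(τᵘ − cos²θ). -/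
open Real Set

/-!
Squaring the Gauss relation gives `cos²θ = cos²θ̂ · τᵘτᵛ`, and the definition of `k` then reads
`1 - cos²θ̂ = k (1 - cos²θ̂ · τᵘτᵛ)`. After clearing denominators, both sides of each evaluation
differ by a multiple of this last relation.
-/

/-- equation (cr) of the paper. The values of the quadratic
`h(t) = t²(kτᵛ - 1) - 2t·cos θ̂·(kτᵘτᵛ - 1) + (kτᵘ - 1)` at `t = 1/cos θ̂` and
`t = cos θ̂`, where `cos θ̂ = cos θ/√(τᵘτᵛ)` and `k = sin²θ̂/sin²θ`. -/
theorem evaluations_of_shape_operator_polynomial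
    (τu τv θ θ' : ℝ) (hτu : 0 < τu) (hτv : 0 < τv)
    (hθ : θ ∈ Set.Ioo 0 π) (hθ' : θ' ∈ Set.Ioo 0 π)
    (hcosθ : Real.cos θ ≠ 0)
    (hgt : Real.cos θ ^ 2 < τu * τv)
    (hcos : Real.cos θ' = Real.cos θ / Real.sqrt (τu * τv))
    (k : ℝ) (hk : k = Real.sin θ' ^ 2 / Real.sin θ ^ 2)
    (h : ℝ → ℝ)
    (hh : ∀ t, h t = t ^ 2 * (k * τv - 1)
        - 2 * t * Real.cos θ' * (k * (τu * τv) - 1) + (k * τu - 1)) :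
    h (1 / Real.cos θ') =
        (k * τu * (τv - 1) / Real.cos θ ^ 2) * (τv - Real.cos θ ^ 2) ∧
      h (Real.cos θ') =
        (k * (τu - 1) / τu) * (τu - Real.cos θ ^ 2) := by
  have hp : 0 < τu * τv := mul_pos hτu hτv
  have hsqrt : √(τu * τv) ≠ 0 := (Real.sqrt_pos.mpr hp).ne'
  have hsinθ : Real.sin θ ≠ 0 := (Real.sin_pos_of_mem_Ioo hθ).ne'
  have hx : Real.cos θ' ≠ 0 := by
    rw [hcos]
    exact div_ne_zero hcosθ hsqrt
  have hcos_sq : Real.cos θ ^ 2 = Real.cos θ' ^ 2 * (τu * τv) := by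
    rw [hcos, div_pow, Real.sq_sqrt hp.le, div_mul_cancel₀ _ hp.ne']
  have hk_mul : 1 - Real.cos θ' ^ 2 = k * (1 - Real.cos θ' ^ 2 * (τu * τv)) := by
    rw [← hcos_sq, ← Real.sin_sq, ← Real.sin_sq, hk, div_mul_cancel₀ _ (pow_ne_zero 2 hsinθ)]
  -- With `cos²θ` eliminated, each identity is `hk_mul` up to ring operations.
  rw [hh, hh, hcos_sq]
  constructor
  · have hrhs : k * τu * (τv - 1) / (Real.cos θ' ^ 2 * (τu * τv))
          * (τv - Real.cos θ' ^ 2 * (τu * τv))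
        = k * (τv - 1) * (1 - Real.cos θ' ^ 2 * τu) / Real.cos θ' ^ 2 := by
      field_simp
    rw [hrhs, eq_div_iff (pow_ne_zero 2 hx)]
    field_simp
    linear_combination -hk_mul
  · have hrhs : k * (τu - 1) / τu * (τu - Real.cos θ' ^ 2 * (τu * τv))
        = k * (τu - 1) * (1 - Real.cos θ' ^ 2 * τv) := by
      field_simp
    rw [hrhs]
    linear_combination -hk_mul
end

section
/- Let Ω ⊆ ℝ² be an open set, let θ : Ω → (0,π) be smooth with θ ≠ π/2 everywhere, let Λᵘ, Λᵛ : Ω → ℝ be smooth, and let τ : Ω → (0,∞) be smooth. Set s = sin²θ and ρ = ln|tan θ|, and for smooth positive functions τᵘ, τᵛ define H_{τᵘ,τᵛ}(ρ) = ∂_u∂_v ρ + (cos²θ/(τᵘτᵛ))·(∂_u ρ)(∂_v ρ) − (Λᵛ/τᵛ)·∂_u ρ − (Λᵘ/τᵘ)·∂_v ρ. Then with τᵘ = τ and τᵛ = 1/τ one has H_{τ,1/τ}(ρ) − H_{1,1}(ρ) = (1 − τ)·Λᵛ·∂_u ρ + (1 − 1/τ)·Λᵘ·∂_v ρ on Ω;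 moreover, at every point where τ ≠ 1, H_{τ,1/τ}(ρ) = H_{1,1}(ρ) holds if and only if τ·Λᵛ·∂_u s = Λᵘ·∂_v s holds there. -/
/-!
The second-order term and the quadratic term (as `τ · (1 / τ) = 1`) agree in both operators, so their
difference is first order, which is the stated identity; it factors as
`(1 - τ) / τ * (τ Λᵛ ρ_u - Λᵘ ρ_v)`. Both `s` and `ρ` are functions of `θ`, with
`ds/dθ = 2 sin θ cos θ` and `dρ/dθ = 1 / (sin θ cos θ)`, hence `ds = 2 sin² θ cos² θ dρ`.
The factor `2 sin² θ cos² θ` does not vanish, so `ρ` may be replaced by `s` in the equation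
(`deriv_sin_sq_eq`).
-/

open Real Set
open scoped ContDiff

/-- The second-order operator (H) of the moduli-space theorem, for ratio functions
`τᵘ, τᵛ`, main angle `θ` and main symbols `Λᵘ, Λᵛ`. -/
noncomputable def Hop (θ Λu Λv τu τv ρ : ℝ × ℝ → ℝ) (p : ℝ × ℝ) : ℝ :=
  pdu (pdv ρ) p + (Real.cos (θ p) ^ 2 / (τu p * τv p)) * pdu ρ p * pdv ρ p
    - (Λv p / τv p) * pdu ρ p - (Λu p / τu p) * pdv ρ p

/-- The relation `ds = 2 sin² θ cos² θ dρ` along a curve, where `s = sin² θ` and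
`ρ = log |tan θ|`. -/
theorem deriv_sin_sq_eq {g : ℝ → ℝ} {t : ℝ} (hg : DifferentiableAt ℝ g t)
    (hsin : Real.sin (g t) ≠ 0) (hcos : Real.cos (g t) ≠ 0) :
    deriv (fun x => Real.sin (g x) ^ 2) t =
      2 * Real.sin (g t) ^ 2 * Real.cos (g t) ^ 2 *
        deriv (fun x => Real.log |Real.tan (g x)|) t := by
  have hsq := (hg.hasDerivAt.sin.pow 2).deriv
  have htan : Real.tan (g t) ≠ 0 := by
    rw [Real.tan_eq_sin_div_cos]
    exact div_ne_zero hsin hcos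
  have hlog := (((Real.hasDerivAt_tan hcos).comp t hg.hasDerivAt).log htan).deriv
  simp only [Real.log_abs]
  simp only [Function.comp_def] at hlog
  rw [hlog]
  refine Eq.trans hsq ?_
  rw [Real.tan_eq_sin_div_cos]
  field_simp
  norm_num
  ring

/-- deformations preserving the main angle: the moduli-space equation
for `τᵘ = τ`, `τᵛ = 1/τ` reduces to `τ·Λᵛ·s_u = Λᵘ·s_v` wherever `τ ≠ 1`. -/
theorem angle_preserving_moduli_equation
    (Ω : Set (ℝ × ℝ)) (hΩ : IsOpen Ω)
    (θ Λu Λv τ : ℝ × ℝ → ℝ)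
    (hθ : ContDiffOn ℝ ∞ θ Ω) (hθrange : ∀ p ∈ Ω, θ p ∈ Set.Ioo 0 π)
    (hθhalf : ∀ p ∈ Ω, θ p ≠ π / 2)
    (hΛu : ContDiffOn ℝ ∞ Λu Ω) (hΛv : ContDiffOn ℝ ∞ Λv Ω)
    (hτ : ContDiffOn ℝ ∞ τ Ω) (hτpos : ∀ p ∈ Ω, 0 < τ p)
    (s ρ : ℝ × ℝ → ℝ)
    (hs : s = fun p => Real.sin (θ p) ^ 2)
    (hρ : ρ = fun p => Real.log |Real.tan (θ p)|) :
    (∀ p ∈ Ω,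
      Hop θ Λu Λv τ (fun q => 1 / τ q) ρ p
          - Hop θ Λu Λv (fun _ => 1) (fun _ => 1) ρ p =
        (1 - τ p) * Λv p * pdu ρ p + (1 - 1 / τ p) * Λu p * pdv ρ p) ∧
    (∀ p ∈ Ω, τ p ≠ 1 →
      (Hop θ Λu Λv τ (fun q => 1 / τ q) ρ p =
          Hop θ Λu Λv (fun _ => 1) (fun _ => 1) ρ p ↔
        τ p * Λv p * pdu s p = Λu p * pdv s p)) := by
  have hdiff : ∀ p ∈ Ω,
      Hop θ Λu Λv τ (fun q => 1 / τ q) ρ p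
          - Hop θ Λu Λv (fun _ => 1) (fun _ => 1) ρ p =
        (1 - τ p) * Λv p * pdu ρ p + (1 - 1 / τ p) * Λu p * pdv ρ p := by
    intro p hp
    have hτ0 : τ p ≠ 0 := (hτpos p hp).ne'
    simp only [Hop]
    field_simp
    ring
  refine ⟨hdiff, fun p hp hτ1 => ?_⟩
  have hτ0 : τ p ≠ 0 := (hτpos p hp).ne'
  have hθp : DifferentiableAt ℝ θ p :=
    (hθ.contDiffAt (hΩ.mem_nhds hp)).differentiableAt (by simp)
  obtain ⟨h0, hπ⟩ := hθrange p hp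
  have hsin : Real.sin (θ p) ≠ 0 := (Real.sin_pos_of_pos_of_lt_pi h0 hπ).ne'
  have hcos : Real.cos (θ p) ≠ 0 := by
    intro h
    -- `cos` is injective on `[0, π]` and vanishes at `π / 2`.
    refine hθhalf p hp (Real.injOn_cos ⟨h0.le, hπ.le⟩ ⟨by positivity, by linarith⟩ ?_)
    rw [h, Real.cos_pi_div_two]
  have hu : pdu s p = 2 * Real.sin (θ p) ^ 2 * Real.cos (θ p) ^ 2 * pdu ρ p := by
    subst hs hρ
    have hg : DifferentiableAt ℝ (fun t => θ (t, p.2)) p.1 :=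
      DifferentiableAt.comp p.1 (g := θ) (f := fun t => (t, p.2)) hθp (by fun_prop)
    exact deriv_sin_sq_eq hg hsin hcos
  have hv : pdv s p = 2 * Real.sin (θ p) ^ 2 * Real.cos (θ p) ^ 2 * pdv ρ p := by
    subst hs hρ
    have hg : DifferentiableAt ℝ (fun t => θ (p.1, t)) p.2 :=
      DifferentiableAt.comp p.2 (g := θ) (f := fun t => (p.1, t)) hθp (by fun_prop)
    exact deriv_sin_sq_eq hg hsin hcos
  have hk : 2 * Real.sin (θ p) ^ 2 * Real.cos (θ p) ^ 2 ≠ 0 := by positivity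
  have hfactor : (1 - τ p) * Λv p * pdu ρ p + (1 - 1 / τ p) * Λu p * pdv ρ p =
      (1 - τ p) / τ p * (τ p * Λv p * pdu ρ p - Λu p * pdv ρ p) := by
    field_simp
    ring
  have hτ1' : (1 - τ p) / τ p ≠ 0 := div_ne_zero (sub_ne_zero.mpr hτ1.symm) hτ0
  rw [← sub_eq_zero, hdiff p hp, hfactor, mul_eq_zero_iff_left hτ1', sub_eq_zero, hu, hv,
    mul_left_comm _ _ (pdu ρ p), mul_left_comm _ _ (pdv ρ p), mul_right_inj' hk]
end

section
/- Let θ₁, θ₂ : ℝ → ℝ be smooth functions and define φ : ℝ² → ℝ by φ(u,v) = cos²(θ₁(u) − θ₂(v)). Then φ satisfies the partial differential equation 2·φ·(1 − φ)·∂_u∂_v φ + (2φ − 1)·(∂_u φ)·(∂_v φ) = 0 at every point of ℝ². -/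
/-!
Write `c`, `s` for the cosine and sine of `θ₁ u - θ₂ v`, and `a`, `b` for the derivatives of
`θ₁` at `u` and of `θ₂` at `v`. The chain rule gives `φ_u = -2csa`, `φ_v = 2csb` and `φ_uv = 2ab(c² - s²)`, while `1 - φ = s²` and
`2φ - 1 = c² - s²`; hence the two terms of the equation are `±4abc²s²(c² - s²)` and cancel.
-/

open Real Set
open scoped ContDiff

/-- `φ(u,v) = cos²(θ₁(u) - θ₂(v))` solves the moduli-space equation
(sepvardefs): `2φ(1 - φ)φ_{uv} + (2φ - 1)φ_u φ_v = 0`. -/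
theorem cos_sq_solves_sepvardefs
    (θ₁ θ₂ : ℝ → ℝ) (hθ₁ : ContDiff ℝ ∞ θ₁) (hθ₂ : ContDiff ℝ ∞ θ₂)
    (φ : ℝ × ℝ → ℝ) (hφ : φ = fun p => Real.cos (θ₁ p.1 - θ₂ p.2) ^ 2) :
    ∀ p : ℝ × ℝ,
      2 * φ p * (1 - φ p) * pdu (pdv φ) p + (2 * φ p - 1) * pdu φ p * pdv φ p = 0 := by
  have d₁ : ∀ x, HasDerivAt θ₁ (deriv θ₁ x) x := fun x =>
    (hθ₁.differentiable (by simp) x).hasDerivAt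
  have d₂ : ∀ x, HasDerivAt θ₂ (deriv θ₂ x) x := fun x =>
    (hθ₂.differentiable (by simp) x).hasDerivAt
  have hv : pdv φ = fun q =>
      2 * cos (θ₁ q.1 - θ₂ q.2) * sin (θ₁ q.1 - θ₂ q.2) * deriv θ₂ q.2 := by
    funext q
    subst hφ
    refine ((((d₂ q.2).const_sub (θ₁ q.1)).cos.pow 2).congr_deriv ?_).deriv
    push_cast
    ring
  have hu : ∀ q, pdu φ q =
      -(2 * cos (θ₁ q.1 - θ₂ q.2) * sin (θ₁ q.1 - θ₂ q.2) * deriv θ₁ q.1) := by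
    intro q
    subst hφ
    refine ((((d₁ q.1).sub_const (θ₂ q.2)).cos.pow 2).congr_deriv ?_).deriv
    push_cast
    ring
  have huv : ∀ q, pdu (pdv φ) q = 2 * deriv θ₁ q.1 * deriv θ₂ q.2 *
      (cos (θ₁ q.1 - θ₂ q.2) ^ 2 - sin (θ₁ q.1 - θ₂ q.2) ^ 2) := by
    intro q
    rw [hv]
    have h := (d₁ q.1).sub_const (θ₂ q.2)
    refine ((((h.cos.const_mul 2).mul h.sin).mul_const (deriv θ₂ q.2)).congr_deriv ?_).deriv
    ring
  intro p
  rw [huv, hu, hv, hφ]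
  dsimp only
  have hs := sin_sq (θ₁ p.1 - θ₂ p.2)
  generalize sin (θ₁ p.1 - θ₂ p.2) = s at *
  generalize cos (θ₁ p.1 - θ₂ p.2) = c at *
  rw [show 1 - c ^ 2 = s ^ 2 from hs.symm, show 2 * c ^ 2 - 1 = c ^ 2 - s ^ 2 by rw [hs]; ring]
  ring
end
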